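/- arXiv:2603.17836 — 3 statements merged into one kernel-verified Lean document; each statement's English description precedes it below -/
import Mathlib

section
/- Let E be a real inner product space and let e_x : ℝ → E be differentiable on [0,T] with T ≥ 0, and let e_y, e_z : ℝ → F, G be functions into normed spaces. Assume constants K_yz, K_yx, L_y, ε ≥ 0 and μ ∈ ℝ such that: (i) for all t ∈ [0,T], ‖e_y(t)‖ ≤ K_yz‖e_z(t)‖ + K_yx‖e_x(t)‖; (ii) for all t ∈ [0,T], ⟪(d/dt)e_x(t), e_x(t)⟫ ≤ μ‖e_x(t)‖² + L_y‖e_y(t)‖·‖e_x(t)‖; (iii) for all t ∈ [0,T], ‖e_z(t)‖ ≤ ε; and (iv) e_x(0) = 0. Then ‖e_x(T)‖ ≤ L_y·K_yz·Φ(T,α)·ε, where α = μ + L_y·K_yx. -/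
open RealInnerProductSpace

/-- Horizon-dependent amplification factor: `Φ(T,α) = (e^{αT} − 1)/α` for `α ≠ 0`,
and `Φ(T,0) = T`. -/
noncomputable def Phi (T α : ℝ) : ℝ :=
  if α = 0 then T else (Real.exp (α * T) - 1) / α

/-!
Grönwall's inequality for `‖f‖` under a one-sided bound on `⟪f', f⟫` cannot be obtained by
differentiating `‖f‖`, which may fail to be differentiable where `f` vanishes. Instead one compares
`‖f‖ ^ 2` with the square of a positive strict supersolution `B`, which satisfies `B' = K B + ε'`
with `ε' > ε`: whenever `‖f‖ ^ 2` touches `B ^ 2`, it is positive there and grows strictly slower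
than `B ^ 2`, so it never crosses. Letting the perturbation tend to zero gives the sharp bound.
-/

theorem Phi_nonneg {T : ℝ} (hT : 0 ≤ T) (α : ℝ) : 0 ≤ Phi T α := by
  unfold Phi
  split_ifs
  · exact hT
  · rcases le_total α 0 with hα | hα
    · have hexp : Real.exp (α * T) ≤ 1 :=
        Real.exp_le_one_iff.mpr (mul_nonpos_of_nonpos_of_nonneg hα hT)
      exact div_nonneg_of_nonpos (sub_nonpos.mpr hexp) hα
    · have hexp : 1 ≤ Real.exp (α * T) := Real.one_le_exp (mul_nonneg hα hT)
      exact div_nonneg (sub_nonneg.mpr hexp) hα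

theorem gronwallBound_eq_mul_exp_add_mul_Phi (δ K ε x : ℝ) :
    gronwallBound δ K ε x = δ * Real.exp (K * x) + ε * Phi x K := by
  unfold gronwallBound Phi
  split_ifs with hK
  · simp [hK]
  · ring

section Gronwall

variable {δ K ε : ℝ}

theorem gronwallBound_pos {x : ℝ} (hδ : 0 < δ) (hε : 0 ≤ ε) (hx : 0 ≤ x) :
    0 < gronwallBound δ K ε x := by
  rw [gronwallBound_eq_mul_exp_add_mul_Phi]
  have hPhi := Phi_nonneg hx K
  positivity

theorem continuous_gronwallBound_add (δ K ε x : ℝ) :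
    Continuous fun η ↦ gronwallBound (δ + η) K (ε + η) x := by
  simp only [gronwallBound_eq_mul_exp_add_mul_Phi]
  fun_prop

variable {E : Type*} [NormedAddCommGroup E] [InnerProductSpace ℝ E] {f f' : ℝ → E} {a b : ℝ}

theorem norm_le_gronwallBound_of_inner_deriv_right_lt (hf : ContinuousOn f (Set.Icc a b))
    (hf' : ∀ t ∈ Set.Ico a b, HasDerivWithinAt f (f' t) (Set.Ici t) t)
    (hδ : 0 < δ) (hε : 0 ≤ ε) (ha : ‖f a‖ ≤ δ)
    (bound : ∀ t ∈ Set.Ico a b, f t ≠ 0 → ⟪f' t, f t⟫ < K * ‖f t‖ ^ 2 + ε * ‖f t‖) :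
    ∀ t ∈ Set.Icc a b, ‖f t‖ ≤ gronwallBound δ K ε (t - a) := by
  set B : ℝ → ℝ := fun t ↦ gronwallBound δ K ε (t - a)
  have hB_pos {t : ℝ} (ht : a ≤ t) : 0 < B t := gronwallBound_pos hδ hε (sub_nonneg.mpr ht)
  have hB_deriv (t : ℝ) : HasDerivAt (fun s ↦ B s ^ 2) (2 * B t * (K * B t + ε)) t := by
    simpa using (hasDerivAt_gronwallBound_shift δ K ε t a).fun_pow 2
  have hstart : ‖f a‖ ^ 2 ≤ B a ^ 2 := by
    simp only [B, sub_self, gronwallBound_x0]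
    gcongr
  have htouch : ∀ t ∈ Set.Ico a b, ‖f t‖ ^ 2 = B t ^ 2 →
      2 * ⟪f t, f' t⟫ < 2 * B t * (K * B t + ε) := fun t ht hsq ↦ by
    have hnorm : ‖f t‖ = B t :=
      (sq_eq_sq₀ (norm_nonneg _) (hB_pos ht.1).le).mp hsq
    have hgrowth := bound t ht (norm_pos_iff.mp (hnorm ▸ hB_pos ht.1))
    rw [hnorm, real_inner_comm] at hgrowth
    linarith
  intro t ht
  exact (sq_le_sq₀ (norm_nonneg _) (hB_pos ht.1).le).mp <|
    image_le_of_deriv_right_lt_deriv_boundary (hf.norm.pow 2) (fun s hs ↦ (hf' s hs).norm_sq)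
      hstart hB_deriv htouch ht

theorem norm_le_gronwallBound_of_inner_deriv_right_le (hf : ContinuousOn f (Set.Icc a b))
    (hf' : ∀ t ∈ Set.Ico a b, HasDerivWithinAt f (f' t) (Set.Ici t) t)
    (hε : 0 ≤ ε) (ha : ‖f a‖ ≤ δ)
    (bound : ∀ t ∈ Set.Ico a b, ⟪f' t, f t⟫ ≤ K * ‖f t‖ ^ 2 + ε * ‖f t‖) :
    ∀ t ∈ Set.Icc a b, ‖f t‖ ≤ gronwallBound δ K ε (t - a) := by
  intro t ht
  have hperturbed : ∀ η ∈ Set.Ioi (0 : ℝ),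
      ‖f t‖ ≤ gronwallBound (δ + η) K (ε + η) (t - a) := fun η (hη : 0 < η) ↦ by
    have hδ : 0 ≤ δ := (norm_nonneg _).trans ha
    refine norm_le_gronwallBound_of_inner_deriv_right_lt hf hf' (by positivity) (by positivity)
      (by linarith) (fun s hs hfs ↦ ?_) t ht
    have hslack : 0 < η * ‖f s‖ := mul_pos hη (norm_pos_iff.mpr hfs)
    linarith [bound s hs]
  have hlim := (continuous_gronwallBound_add δ K ε (t - a)).continuousWithinAt
    (s := Set.Ioi 0) (x := 0)
  simpa using ge_of_tendsto hlim (eventually_mem_nhdsWithin.mono hperturbed)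

end Gronwall

theorem finite_horizon_state_bound_general
    {E F G : Type*} [NormedAddCommGroup E] [InnerProductSpace ℝ E] [Norm F] [Norm G]
    {T : ℝ} (hT : 0 ≤ T) {e_x e_x' : ℝ → E} {e_y : ℝ → F} {e_z : ℝ → G}
    (hcont : ContinuousOn e_x (Set.Icc 0 T))
    (hderiv : ∀ t ∈ Set.Ico 0 T, HasDerivWithinAt e_x (e_x' t) (Set.Ici t) t)
    {K_yz K_yx L_y ε μ : ℝ} (hKyz : 0 ≤ K_yz) (hLy : 0 ≤ L_y) (hε : 0 ≤ ε)
    (h_alg : ∀ t ∈ Set.Ico 0 T, ‖e_y t‖ ≤ K_yz * ‖e_z t‖ + K_yx * ‖e_x t‖)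
    (h_dyn : ∀ t ∈ Set.Ico 0 T,
      ⟪e_x' t, e_x t⟫ ≤ μ * ‖e_x t‖ ^ 2 + L_y * ‖e_y t‖ * ‖e_x t‖)
    (h_interface : ∀ t ∈ Set.Ico 0 T, ‖e_z t‖ ≤ ε) :
    ‖e_x T‖ ≤ ‖e_x 0‖ * Real.exp ((μ + L_y * K_yx) * T) +
      L_y * K_yz * Phi T (μ + L_y * K_yx) * ε := by
  have h_closed : ∀ t ∈ Set.Ico 0 T,
      ⟪e_x' t, e_x t⟫ ≤ (μ + L_y * K_yx) * ‖e_x t‖ ^ 2 + L_y * K_yz * ε * ‖e_x t‖ := fun t ht ↦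
    calc ⟪e_x' t, e_x t⟫
      _ ≤ μ * ‖e_x t‖ ^ 2 + L_y * ‖e_y t‖ * ‖e_x t‖ := h_dyn t ht
      _ ≤ μ * ‖e_x t‖ ^ 2 + L_y * (K_yz * ‖e_z t‖ + K_yx * ‖e_x t‖) * ‖e_x t‖ := by
        gcongr
        exact h_alg t ht
      _ ≤ μ * ‖e_x t‖ ^ 2 + L_y * (K_yz * ε + K_yx * ‖e_x t‖) * ‖e_x t‖ := by
        gcongr
        exact h_interface t ht
      _ = (μ + L_y * K_yx) * ‖e_x t‖ ^ 2 + L_y * K_yz * ε * ‖e_x t‖ := by ring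
  calc ‖e_x T‖
    _ ≤ gronwallBound ‖e_x 0‖ (μ + L_y * K_yx) (L_y * K_yz * ε) (T - 0) :=
      norm_le_gronwallBound_of_inner_deriv_right_le hcont hderiv (by positivity) le_rfl h_closed
        T (Set.right_mem_Icc.mpr hT)
    _ = ‖e_x 0‖ * Real.exp ((μ + L_y * K_yx) * T) +
        L_y * K_yz * Phi T (μ + L_y * K_yx) * ε := by
      rw [gronwallBound_eq_mul_exp_add_mul_Phi, sub_zero]
      ring

/-- Finite-horizon in-simulator acceptance bound: state-error part. -/
theorem finite_horizon_state_bound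
    {E F G : Type*} [NormedAddCommGroup E] [InnerProductSpace ℝ E]
    [NormedAddCommGroup F] [NormedSpace ℝ F]
    [NormedAddCommGroup G] [NormedSpace ℝ G]
    (T : ℝ) (hT : 0 ≤ T)
    (e_x : ℝ → E) (e_y : ℝ → F) (e_z : ℝ → G)
    (hdiff : ∀ t ∈ Set.Icc (0 : ℝ) T, DifferentiableAt ℝ e_x t)
    (K_yz K_yx L_y ε μ : ℝ)
    (hKyz : 0 ≤ K_yz) (hKyx : 0 ≤ K_yx) (hLy : 0 ≤ L_y) (hε : 0 ≤ ε)
    (h1 : ∀ t ∈ Set.Icc (0 : ℝ) T, ‖e_y t‖ ≤ K_yz * ‖e_z t‖ + K_yx * ‖e_x t‖)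
    (h2 : ∀ t ∈ Set.Icc (0 : ℝ) T,
      ⟪deriv e_x t, e_x t⟫ ≤ μ * ‖e_x t‖ ^ 2 + L_y * ‖e_y t‖ * ‖e_x t‖)
    (h3 : ∀ t ∈ Set.Icc (0 : ℝ) T, ‖e_z t‖ ≤ ε)
    (h4 : e_x 0 = 0) :
    ‖e_x T‖ ≤ L_y * K_yz * Phi T (μ + L_y * K_yx) * ε := by
  have hIco {t : ℝ} (ht : t ∈ Set.Ico 0 T) : t ∈ Set.Icc 0 T := Set.Ico_subset_Icc_self ht
  simpa [h4] using finite_horizon_state_bound_general hT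
    (fun t ht ↦ (hdiff t ht).continuousAt.continuousWithinAt)
    (fun t ht ↦ (hdiff t (hIco ht)).hasDerivAt.hasDerivWithinAt) hKyz hLy hε
    (fun t ht ↦ h1 t (hIco ht)) (fun t ht ↦ h2 t (hIco ht)) (fun t ht ↦ h3 t (hIco ht))
end

section
/- Let E be a real inner product space, F a normed space, and f : E × F → E such that: (a) for all x₁, x₂ ∈ E and y ∈ F, ⟪f(x₁,y) − f(x₂,y), x₁ − x₂⟫ ≤ μ‖x₁ − x₂‖² (one-sided Lipschitz in x with constant μ ∈ ℝ), and (b) for all x ∈ E and y₁, y₂ ∈ F, ‖f(x,y₁) − f(x,y₂)‖ ≤ L_y‖y₁ − y₂‖ with L_y ≥ 0. Let x, x̂ : ℝ → E be differentiable with x'(t) = f(x(t), y(t)) and x̂'(t) = f(x̂(t), ŷ(t)) for functions y, ŷ : ℝ → F. Then for all t, setting e_x(t) = x̂(t) − x(t) and e_y(t) = ŷ(t) − y(t): ⟪e_x'(t), e_x(t)⟫ ≤ μ‖e_x(t)‖² + L_y‖e_y(t)‖·‖e_x(t)‖. -/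
open RealInnerProductSpace

/-- One-sided Lipschitz continuity of a vector field `g`, which bounds the rate at which two of its
trajectories separate. The constant is a real number rather than an `NNReal` because negative
values, which express contraction, are meaningful. -/
def OneSidedLipschitzWith {E : Type*} [SeminormedAddCommGroup E] [InnerProductSpace ℝ E]
    (μ : ℝ) (g : E → E) : Prop :=
  ∀ x₁ x₂ : E, ⟪g x₁ - g x₂, x₁ - x₂⟫ ≤ μ * ‖x₁ - x₂‖ ^ 2

theorem OneSidedLipschitzWith.inner_sub_le_add_norm_sub_mul
    {E : Type*} [SeminormedAddCommGroup E] [InnerProductSpace ℝ E] {μ : ℝ} {g : E → E}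
    (hg : OneSidedLipschitzWith μ g) (x₁ x₂ v : E) :
    ⟪g x₁ - v, x₁ - x₂⟫ ≤ μ * ‖x₁ - x₂‖ ^ 2 + ‖g x₂ - v‖ * ‖x₁ - x₂‖ :=
  calc ⟪g x₁ - v, x₁ - x₂⟫
    _ = ⟪g x₁ - g x₂, x₁ - x₂⟫ + ⟪g x₂ - v, x₁ - x₂⟫ := by
      rw [← inner_add_left, sub_add_sub_cancel]
    _ ≤ μ * ‖x₁ - x₂‖ ^ 2 + ‖g x₂ - v‖ * ‖x₁ - x₂‖ :=
      add_le_add (hg x₁ x₂) (real_inner_le_norm _ _)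

theorem state_error_one_sided_inequality_general
    {E F : Type*} [NormedAddCommGroup E] [InnerProductSpace ℝ E] [PseudoMetricSpace F]
    {f : E → F → E} {μ : ℝ} {L : NNReal}
    (hf_state : ∀ y, OneSidedLipschitzWith μ (f · y)) (hf_alg : ∀ x, LipschitzWith L (f x))
    {x xh : ℝ → E} {y yh : ℝ → F} {t : ℝ}
    (hx : HasDerivAt x (f (x t) (y t)) t) (hxh : HasDerivAt xh (f (xh t) (yh t)) t) :
    ⟪deriv (fun s => xh s - x s) t, xh t - x t⟫ ≤
      μ * ‖xh t - x t‖ ^ 2 + L * dist (yh t) (y t) * ‖xh t - x t‖ := by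
  have h_deriv : deriv (fun s => xh s - x s) t = f (xh t) (yh t) - f (x t) (y t) :=
    (hxh.sub hx).deriv
  have h_alg : ‖f (x t) (yh t) - f (x t) (y t)‖ ≤ L * dist (yh t) (y t) := by
    simpa only [dist_eq_norm] using (hf_alg (x t)).dist_le_mul (yh t) (y t)
  rw [h_deriv]
  calc ⟪f (xh t) (yh t) - f (x t) (y t), xh t - x t⟫
    _ ≤ μ * ‖xh t - x t‖ ^ 2 + ‖f (x t) (yh t) - f (x t) (y t)‖ * ‖xh t - x t‖ :=
      (hf_state (yh t)).inner_sub_le_add_norm_sub_mul (xh t) (x t) (f (x t) (y t))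
    _ ≤ μ * ‖xh t - x t‖ ^ 2 + L * dist (yh t) (y t) * ‖xh t - x t‖ := by gcongr

/-- Derivation of the one-sided differential inequality on the state error from
one-sided Lipschitz continuity of the dynamics in the state and Lipschitz
continuity in the algebraic variables. -/
theorem state_error_one_sided_inequality
    {E F : Type*} [NormedAddCommGroup E] [InnerProductSpace ℝ E]
    [NormedAddCommGroup F] [NormedSpace ℝ F]
    (f : E → F → E) (μ L_y : ℝ) (hLy : 0 ≤ L_y)
    (ha : ∀ (x₁ x₂ : E) (y : F), ⟪f x₁ y - f x₂ y, x₁ - x₂⟫ ≤ μ * ‖x₁ - x₂‖ ^ 2)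
    (hb : ∀ (x : E) (y₁ y₂ : F), ‖f x y₁ - f x y₂‖ ≤ L_y * ‖y₁ - y₂‖)
    (x xh : ℝ → E) (y yh : ℝ → F)
    (hx : ∀ t, HasDerivAt x (f (x t) (y t)) t)
    (hxh : ∀ t, HasDerivAt xh (f (xh t) (yh t)) t) :
    ∀ t, ⟪deriv (fun s => xh s - x s) t, xh t - x t⟫ ≤
      μ * ‖xh t - x t‖ ^ 2 + L_y * ‖yh t - y t‖ * ‖xh t - x t‖ := by
  lift L_y to NNReal using hLy
  simpa only [dist_eq_norm] using fun t => state_error_one_sided_inequality_general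
    (fun y x₁ x₂ => ha x₁ x₂ y)
    (fun x => .of_dist_le_mul (by simpa only [dist_eq_norm] using hb x)) (hx t) (hxh t)
end

section
/- Let E be a real inner product space, c ≥ 0, T ≥ 0, and let e : ℝ → E be differentiable on [0,T] with e(0) = 0 and ⟪e'(t), e(t)⟫ ≤ c‖e(t)‖ for all t ∈ [0,T]. Then ‖e(T)‖ ≤ c·T. -/
open RealInnerProductSpace

/-!
Since `⟪e', e⟫` is half the derivative of `‖e‖ ^ 2`, a barrier `B` for `‖e‖` can be tested by
comparing squares, which avoids differentiating the norm at zeros of `e`. A non-strict differential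
inequality becomes strict, with a positive barrier, after replacing `B t` by
`B t + ε * (1 + (t - a))`; then let `ε → 0`.
-/

open Set

section Fencing

variable {E : Type*} [NormedAddCommGroup E] [InnerProductSpace ℝ E]
  {f f' : ℝ → E} {B B' : ℝ → ℝ} {a b : ℝ}

theorem image_norm_le_of_inner_deriv_right_lt_deriv_boundary
    (hf : ContinuousOn f (Icc a b)) (hf' : ∀ x ∈ Ico a b, HasDerivWithinAt f (f' x) (Ici x) x)
    (ha : ‖f a‖ ≤ B a) (hB : ContinuousOn B (Icc a b))
    (hB' : ∀ x ∈ Ico a b, HasDerivWithinAt B (B' x) (Ici x) x)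
    (hB_nonneg : ∀ x ∈ Icc a b, 0 ≤ B x)
    (bound : ∀ x ∈ Ico a b, ‖f x‖ = B x → ⟪f' x, f x⟫ < B' x * B x) :
    ∀ ⦃x⦄, x ∈ Icc a b → ‖f x‖ ≤ B x := by
  intro x hx
  have hf_sq : ∀ y ∈ Ico a b,
      HasDerivWithinAt (fun z ↦ ‖f z‖ ^ 2) (2 * ⟪f y, f' y⟫) (Ici y) y :=
    fun y hy ↦ (hf' y hy).norm_sq
  have hB_sq : ∀ y ∈ Ico a b,
      HasDerivWithinAt (fun z ↦ B z ^ 2) (2 * (B' y * B y)) (Ici y) y :=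
    fun y hy ↦ ((hB' y hy).fun_pow 2).congr_deriv (by ring)
  have bound_sq : ∀ y ∈ Ico a b, ‖f y‖ ^ 2 = B y ^ 2 → 2 * ⟪f y, f' y⟫ < 2 * (B' y * B y) := by
    intro y hy heq
    have hnorm : ‖f y‖ = B y :=
      (sq_eq_sq₀ (norm_nonneg _) (hB_nonneg y (Ico_subset_Icc_self hy))).1 heq
    rw [real_inner_comm]
    linarith [bound y hy hnorm]
  have hle_sq : ‖f x‖ ^ 2 ≤ B x ^ 2 :=
    image_le_of_deriv_right_lt_deriv_boundary' (hf.norm.pow 2) hf_sq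
      (pow_le_pow_left₀ (norm_nonneg _) ha 2) (hB.pow 2) hB_sq bound_sq hx
  exact (sq_le_sq₀ (norm_nonneg _) (hB_nonneg x hx)).1 hle_sq

theorem image_norm_le_of_inner_deriv_right_le_deriv_boundary
    (hf : ContinuousOn f (Icc a b)) (hf' : ∀ x ∈ Ico a b, HasDerivWithinAt f (f' x) (Ici x) x)
    (ha : ‖f a‖ ≤ B a) (hB : ContinuousOn B (Icc a b))
    (hB' : ∀ x ∈ Ico a b, HasDerivWithinAt B (B' x) (Ici x) x)
    (hB_nonneg : ∀ x ∈ Icc a b, 0 ≤ B x)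
    (bound : ∀ x ∈ Ico a b, ⟪f' x, f x⟫ ≤ B' x * ‖f x‖) :
    ∀ ⦃x⦄, x ∈ Icc a b → ‖f x‖ ≤ B x := by
  intro x hx
  have one_add_sub_pos : ∀ y ∈ Icc a b, 0 < 1 + (y - a) := fun y hy ↦ by linarith [hy.1]
  have perturbed : ∀ ε > 0, ‖f x‖ ≤ B x + ε * (1 + (x - a)) := by
    intro ε hε
    have hBε_pos : ∀ y ∈ Icc a b, 0 < B y + ε * (1 + (y - a)) := fun y hy ↦
      add_pos_of_nonneg_of_pos (hB_nonneg y hy) (mul_pos hε (one_add_sub_pos y hy))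
    have hBε_left : ‖f a‖ ≤ B a + ε * (1 + (a - a)) := by linarith
    have hBε_deriv : ∀ y ∈ Ico a b,
        HasDerivWithinAt (fun z ↦ B z + ε * (1 + (z - a))) (B' y + ε) (Ici y) y := fun y hy ↦ by
      simpa using (hB' y hy).fun_add
        ((((hasDerivWithinAt_id y (Ici y)).sub_const a).const_add 1).const_mul ε)
    have bound_lt : ∀ y ∈ Ico a b, ‖f y‖ = B y + ε * (1 + (y - a)) →
        ⟪f' y, f y⟫ < (B' y + ε) * (B y + ε * (1 + (y - a))) := by
      intro y hy heq
      have hnorm_pos : 0 < ‖f y‖ := heq ▸ hBε_pos y (Ico_subset_Icc_self hy)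
      calc ⟪f' y, f y⟫ ≤ B' y * ‖f y‖ := bound y hy
        _ < (B' y + ε) * ‖f y‖ := by gcongr; linarith
        _ = (B' y + ε) * (B y + ε * (1 + (y - a))) := by rw [heq]
    exact image_norm_le_of_inner_deriv_right_lt_deriv_boundary hf hf'
      hBε_left (hB.fun_add (by fun_prop)) hBε_deriv (fun y hy ↦ (hBε_pos y hy).le) bound_lt hx
  refine le_of_forall_pos_le_add fun δ hδ ↦ ?_
  have hpos := one_add_sub_pos x hx
  simpa only [div_mul_cancel₀ δ hpos.ne'] using perturbed (δ / (1 + (x - a))) (div_pos hδ hpos)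

theorem gronwall_kernel_zero_general {c : ℝ} (hc : 0 ≤ c) (hf : ContinuousOn f (Icc a b))
    (hf' : ∀ x ∈ Ico a b, HasDerivWithinAt f (f' x) (Ici x) x)
    (bound : ∀ x ∈ Ico a b, ⟪f' x, f x⟫ ≤ c * ‖f x‖) :
    ∀ ⦃x⦄, x ∈ Icc a b → ‖f x‖ ≤ ‖f a‖ + c * (x - a) := by
  refine image_norm_le_of_inner_deriv_right_le_deriv_boundary
    (B := fun x ↦ ‖f a‖ + c * (x - a)) (B' := fun _ ↦ c) hf hf' (by simp) (by fun_prop)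
    (fun x _ ↦ ?_) (fun x hx ↦ ?_) bound
  · simpa using (((hasDerivWithinAt_id x (Ici x)).sub_const a).const_mul c).const_add ‖f a‖
  · exact add_nonneg (norm_nonneg _) (mul_nonneg hc (sub_nonneg.2 hx.1))

end Fencing

/-- Grönwall-type kernel of the finite-horizon in-simulator bound, case `α = 0`. -/
theorem gronwall_kernel_zero
    {E : Type*} [NormedAddCommGroup E] [InnerProductSpace ℝ E]
    (c T : ℝ) (hc : 0 ≤ c) (hT : 0 ≤ T)
    (e : ℝ → E)
    (hdiff : ∀ t ∈ Set.Icc (0 : ℝ) T, DifferentiableAt ℝ e t)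
    (h0 : e 0 = 0)
    (hineq : ∀ t ∈ Set.Icc (0 : ℝ) T, ⟪deriv e t, e t⟫ ≤ c * ‖e t‖) :
    ‖e T‖ ≤ c * T := by
  simpa [h0] using gronwall_kernel_zero_general hc
    (fun t ht ↦ (hdiff t ht).continuousAt.continuousWithinAt)
    (fun t ht ↦ (hdiff t (Ico_subset_Icc_self ht)).hasDerivAt.hasDerivWithinAt)
    (fun t ht ↦ hineq t (Ico_subset_Icc_self ht)) (right_mem_Icc.2 hT)
end
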